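/- arXiv:2010.07364 — 2 statements merged into one kernel-verified Lean document; each statement's English description precedes it below -/
import Mathlib

section
/- Let p be an odd prime and α ∈ ℚ_p a quadratic irrational whose BCF complete quotients admit a representation α_n = (b_n + δ)/(p^{k_n} c_n) with b_n, c_n, k_n ∈ ℤ, c_n ≠ 0, p ∤ c_n, where δ ∈ ℚ_p and δ² = Δ is a non-square integer. Then the BCF expansion of α is periodic (there exist m ≥ 0 and N ≥ 1 with α_{m+N} = α_m) if and only if there exists a strictly increasing sequence of indices (n_t) on which |b_{n_t}| is constant. -/
/-- `y ∈ 𝒴 = ℤ[1/p] ∩ (−p/2, p/2)`: a possible Browkin partial quotient. -/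
def IsBrowkinDigit (p : ℕ) (y : ℚ) : Prop :=
  (∃ z : ℤ, ∃ j : ℕ, y = (z : ℚ) / (p : ℚ) ^ j) ∧
  -(p : ℚ) / 2 < y ∧ y < (p : ℚ) / 2

/-- `αs` is the sequence of complete quotients and `a` the sequence of partial
quotients of the (non-terminating) Browkin continued fraction algorithm:
`a n = s (αs n)` (i.e. `a n ∈ 𝒴` and `|αs n − a n|_p < 1`) and
`αs (n+1) = 1/(αs n − a n)`. -/
def IsBCF (p : ℕ) [Fact p.Prime] (αs : ℕ → ℚ_[p]) (a : ℕ → ℚ) : Prop :=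
  ∀ n, IsBrowkinDigit p (a n) ∧ ‖αs n - (a n : ℚ_[p])‖ < 1 ∧
    αs (n + 1) = (αs n - (a n : ℚ_[p]))⁻¹

theorem bcf_indep (p : ℕ) [Fact p.Prime] (δ : ℚ_[p]) (Δ : ℤ) (hδ : δ ^ 2 = (Δ : ℚ_[p]))
    (hΔ : ¬IsSquare Δ) (x y : ℚ) (h : (x : ℚ_[p]) + y * δ = 0) : x = 0 ∧ y = 0 := by
  have hy : y = 0 := by
    by_contra hy
    apply hΔ
    rw [← Rat.isSquare_intCast_iff]
    have hy' : (y : ℚ_[p]) ≠ 0 := by exact_mod_cast hy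
    have h1 : δ = ((-x / y : ℚ) : ℚ_[p]) := by
      push_cast
      rw [eq_div_iff hy']
      linear_combination h
    refine ⟨-x / y, ?_⟩
    rw [h1] at hδ
    have : ((-x / y) ^ 2 : ℚ) = (Δ : ℚ) := by exact_mod_cast hδ
    rw [← this, sq]
  subst hy
  refine ⟨?_, rfl⟩
  simpa using h

theorem bcf_digit_unique (p : ℕ) [hpf : Fact p.Prime] (y z : ℚ) (hy : IsBrowkinDigit p y)
    (hz : IsBrowkinDigit p z) (h : ‖(y : ℚ_[p]) - z‖ < 1) : y = z := by
  obtain ⟨⟨u, i, hu⟩, hy1, hy2⟩ := hy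
  obtain ⟨⟨v, j, hv⟩, hz1, hz2⟩ := hz
  have hp0 : (p : ℚ) ≠ 0 := by exact_mod_cast hpf.out.ne_zero
  have hpp : (0 : ℚ) < p := by exact_mod_cast hpf.out.pos
  have hpR : (0 : ℝ) < p := by exact_mod_cast hpf.out.pos
  -- the difference times `p ^ (i + j)` is an integer `w`
  obtain ⟨w, hw⟩ : ∃ w : ℤ, (w : ℚ) = (y - z) * p ^ (i + j) := by
    refine ⟨u * p ^ j - v * p ^ i, ?_⟩
    rw [hu, hv]
    push_cast
    field_simp
    ring
  have hwp : (w : ℚ_[p]) = ((y : ℚ_[p]) - z) * (p : ℚ_[p]) ^ (i + j) := by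
    exact_mod_cast congrArg (fun q : ℚ => (q : ℚ_[p])) hw
  have hn : ‖(w : ℚ_[p])‖ < (p : ℝ) ^ (-((i + j : ℕ) : ℤ)) := by
    rw [hwp, norm_mul, Padic.norm_p_pow]
    have : (0 : ℝ) < (p : ℝ) ^ (-((i + j : ℕ) : ℤ)) := zpow_pos hpR _
    nlinarith
  have hdvd : ((p : ℤ) ^ (i + j + 1)) ∣ w := by
    have := (Padic.norm_int_le_pow_iff_dvd (p := p) w (i + j + 1)).1 (by
      rw [Padic.norm_le_pow_iff_norm_lt_pow_add_one]
      convert hn using 2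
      push_cast
      ring)
    exact_mod_cast this
  obtain ⟨t, ht⟩ := hdvd
  have hd : y - z = p * t := by
    have h1 : (y - z) * (p : ℚ) ^ (i + j) = (p * t) * (p : ℚ) ^ (i + j) := by
      rw [← hw, ht]
      push_cast
      ring
    exact mul_right_cancel₀ (pow_ne_zero _ hp0) h1
  have ht1 : (t : ℚ) < 1 := by nlinarith
  have ht2 : (-1 : ℚ) < t := by nlinarith
  have ht0 : t = 0 := by
    have h1 : t < 1 := by exact_mod_cast ht1
    have h2 : -1 < t := by exact_mod_cast ht2
    omega
  rw [ht0] at hd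
  simp at hd
  linarith

/-- the BCF expansion of `α` is periodic iff there is a strictly
increasing sequence of indices on which `|b_n|` is constant. -/
theorem browkin_periodic_iff_b_constant_subseq
    (p : ℕ) [Fact p.Prime] (hp : Odd p)
    (α : ℚ_[p]) (hirr : ∀ q : ℚ, α ≠ (q : ℚ_[p]))
    (αs : ℕ → ℚ_[p]) (a : ℕ → ℚ) (hα0 : αs 0 = α) (hbcf : IsBCF p αs a)
    (δ : ℚ_[p]) (Δ : ℤ) (hδ : δ ^ 2 = (Δ : ℚ_[p])) (hΔ : ¬IsSquare Δ)
    (b c : ℕ → ℤ) (kk : ℕ → ℤ)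
    (hrep : ∀ n, c n ≠ 0 ∧ ¬((p : ℤ) ∣ c n) ∧
      αs n = ((b n : ℚ_[p]) + δ) / ((p : ℚ_[p]) ^ (kk n) * (c n : ℚ_[p])))
    :
    (∃ m N : ℕ, 1 ≤ N ∧ αs (m + N) = αs m) ↔
      (∃ f : ℕ → ℕ, StrictMono f ∧ ∀ t : ℕ, |b (f t)| = |b (f 0)|) := by
  have hp0 : (p : ℚ) ≠ 0 := by exact_mod_cast (Fact.out : p.Prime).ne_zero
  have hpR : (1 : ℝ) < p := by exact_mod_cast (Fact.out : p.Prime).one_lt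
  obtain ⟨D, hD⟩ : ∃ D : ℕ → ℚ, ∀ n, D n = (p : ℚ) ^ (kk n) * (c n : ℚ) := ⟨_, fun _ => rfl⟩
  have hD0 : ∀ n, D n ≠ 0 := by
    intro n
    rw [hD]
    exact mul_ne_zero (zpow_ne_zero _ hp0) (by exact_mod_cast (hrep n).1)
  have hDp0 : ∀ n, (D n : ℚ_[p]) ≠ 0 := fun n => by exact_mod_cast hD0 n
  have hα : ∀ n, αs n = ((b n : ℚ_[p]) + δ) / (D n : ℚ_[p]) := by
    intro n
    rw [(hrep n).2.2, hD]
    push_cast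
    rfl
  have hind := bcf_indep p δ Δ hδ hΔ
  have hne : ∀ n, αs n - (a n : ℚ_[p]) ≠ 0 := by
    intro n h
    have h1 : (((b n : ℚ) - a n * D n : ℚ) : ℚ_[p]) + ((1 : ℚ) : ℚ_[p]) * δ = 0 := by
      have h2 := hDp0 n
      rw [hα] at h
      field_simp at h
      push_cast
      linear_combination h
    exact one_ne_zero (hind _ _ h1).2
  constructor
  · rintro ⟨m, N, hN, hmN⟩
    have hstep : ∀ i j, αs i = αs j → αs (i + 1) = αs (j + 1) := by
      intro i j hij
      have : a i = a j := by
        apply bcf_digit_unique p _ _ (hbcf i).1 (hbcf j).1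
        have h1 := (hbcf i).2.1
        have h2 := (hbcf j).2.1
        have h3 : (a i : ℚ_[p]) - a j = (αs j - a j) - (αs i - a i) := by rw [hij]; ring
        rw [h3]
        have h4 := Padic.nonarchimedean (αs j - (a j : ℚ_[p])) (-(αs i - (a i : ℚ_[p])))
        rw [norm_neg, ← sub_eq_add_neg] at h4
        exact lt_of_le_of_lt h4 (max_lt h2 h1)
      rw [(hbcf i).2.2, (hbcf j).2.2, hij, this]
    have hper : ∀ k, αs (m + N + k) = αs (m + k) := by
      intro k
      induction k with
      | zero => simpa using hmN
      | succ k ih => exact hstep _ _ ih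
    have hall : ∀ t, αs (m + t * N) = αs m := by
      intro t
      induction t with
      | zero => simp
      | succ t ih =>
        rw [← ih, ← hper (t * N)]
        congr 1
        ring
    have hb : ∀ i j, αs i = αs j → b i = b j := by
      intro i j h
      have hi := hDp0 i
      have hj := hDp0 j
      rw [hα, hα, div_eq_div_iff hi hj] at h
      have h1 : (((b i : ℚ) * D j - b j * D i : ℚ) : ℚ_[p])
          + ((D j - D i : ℚ) : ℚ_[p]) * δ = 0 := by
        push_cast
        linear_combination h
      obtain ⟨h2, h3⟩ := hind _ _ h1
      have h4 : D j = D i := by linarith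
      rw [h4, ← sub_mul] at h2
      rcases mul_eq_zero.1 h2 with h5 | h5
      · have : (b i : ℚ) = b j := by linarith
        exact_mod_cast this
      · exact absurd h5 (hD0 i)
    refine ⟨fun t => m + t * N, ?_, ?_⟩
    · intro s t hst
      have : s * N < t * N := Nat.mul_lt_mul_of_pos_right hst hN
      show m + s * N < m + t * N
      omega
    · intro t
      have := hb (m + t * N) (m + 0 * N) (by rw [hall, hall])
      show |b (m + t * N)| = |b (m + 0 * N)|
      rw [this]
  · rintro ⟨f, hf, hfb⟩
    -- the norm relation
    have hrec : ∀ n, D n * D (n + 1) = (Δ : ℚ) - (b (n + 1) : ℚ) ^ 2 := by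
      intro n
      have h1 : αs (n + 1) * (αs n - (a n : ℚ_[p])) = 1 := by
        rw [(hbcf n).2.2, inv_mul_cancel₀ (hne n)]
      have hi := hDp0 n
      have hj := hDp0 (n + 1)
      have h2 : ((b (n + 1) : ℚ_[p]) + δ) * (b n + δ - a n * D n) = D n * D (n + 1) := by
        rw [hα, hα] at h1
        field_simp at h1
        linear_combination h1
      have h3 : (((b (n + 1) : ℚ) * (b n - a n * D n) + Δ - D n * D (n + 1) : ℚ) : ℚ_[p])
          + (((b (n + 1) : ℚ) + b n - a n * D n : ℚ) : ℚ_[p]) * δ = 0 := by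
        push_cast
        linear_combination h2 - hδ
      obtain ⟨h4, h5⟩ := hind _ _ h3
      linear_combination (b (n + 1) : ℚ) * h5 - h4
    have hδn : ‖δ‖ ≤ 1 := by
      have h1 : ‖δ‖ ^ 2 ≤ 1 := by
        rw [← norm_pow, hδ]
        exact Padic.norm_int_le_one _
      nlinarith [norm_nonneg δ]
    have hk : ∀ n, 1 ≤ n → 0 ≤ kk n := by
      intro n hn
      obtain ⟨n, rfl⟩ : ∃ l, n = l + 1 := ⟨n - 1, by omega⟩
      by_contra hneg
      push Not at hneg
      have h1 : 1 < ‖αs (n + 1)‖ := by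
        rw [(hbcf n).2.2, norm_inv]
        exact (one_lt_inv₀ (norm_pos_iff.2 (hne n))).2 (hbcf n).2.1
      have h2 : ‖(c (n + 1) : ℚ_[p])‖ = 1 := by
        apply le_antisymm (Padic.norm_int_le_one _)
        by_contra h
        push Not at h
        exact (hrep (n + 1)).2.1 (Padic.norm_intCast_lt_one_iff.1 h)
      rw [(hrep (n + 1)).2.2, norm_div, norm_mul, h2, Padic.norm_p_zpow, mul_one] at h1
      have h3 : ‖(b (n + 1) : ℚ_[p]) + δ‖ ≤ 1 :=
        (Padic.nonarchimedean _ _).trans (max_le (Padic.norm_int_le_one _) hδn)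
      have h4 : (1 : ℝ) ≤ (p : ℝ) ^ (-kk (n + 1)) := one_le_zpow₀ hpR.le (by omega)
      have h5 := (div_le_one (by linarith)).2 (h3.trans h4)
      linarith
    have hDint : ∀ n, 1 ≤ n → ∃ d : ℤ, (d : ℚ) = D n := by
      intro n hn
      obtain ⟨k, hk'⟩ := Int.eq_ofNat_of_zero_le (hk n hn)
      refine ⟨(p : ℤ) ^ k * c n, ?_⟩
      rw [hD, hk']
      push_cast
      simp
    have hf2 : ∀ t, 2 ≤ f (t + 2) := fun t => le_trans (by omega : 2 ≤ t + 2) (hf.id_le (t + 2))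
    choose d hd using fun t => hDint (f (t + 2)) (by have := hf2 t; omega)
    obtain ⟨B, hB⟩ : ∃ B : ℤ, B = b (f 0) := ⟨_, rfl⟩
    have hsq : ∀ t, b (f t) ^ 2 = B ^ 2 := fun t => by
      rw [hB]
      exact (sq_eq_sq_iff_abs_eq_abs _ _).2 (hfb t)
    have hM : Δ - B ^ 2 ≠ 0 := by
      intro h
      exact hΔ ⟨B, by linarith [sq B]⟩
    have hdd : ∀ t, d t ∣ Δ - B ^ 2 := by
      intro t
      have h2 := hf2 t
      obtain ⟨e, he⟩ := hDint (f (t + 2) - 1) (by omega)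
      have h3 := hrec (f (t + 2) - 1)
      rw [Nat.sub_add_cancel (by omega), ← he, ← hd] at h3
      have h4 : e * d t = Δ - b (f (t + 2)) ^ 2 := by exact_mod_cast h3
      rw [hsq] at h4
      exact ⟨e, by rw [← h4]; ring⟩
    have hmaps : ∀ t : ℕ, (b (f (t + 2)), d t) ∈
        ((Set.Icc (-|B|) |B|) ×ˢ (Set.Icc (-|Δ - B ^ 2|) |Δ - B ^ 2|) : Set (ℤ × ℤ)) := by
      intro t
      refine ⟨?_, ?_⟩
      · have := hfb (t + 2)
        rw [← hB] at this
        exact abs_le.1 this.le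
      · have : |d t| ≤ |Δ - B ^ 2| := Int.le_of_dvd (abs_pos.2 hM) ((abs_dvd_abs _ _).2 (hdd t))
        exact abs_le.1 this
    have hfin : ((Set.Icc (-|B|) |B|) ×ˢ (Set.Icc (-|Δ - B ^ 2|) |Δ - B ^ 2|) :
        Set (ℤ × ℤ)).Finite := (Set.finite_Icc _ _).prod (Set.finite_Icc _ _)
    obtain ⟨s, -, t, -, hst, heq⟩ := Set.infinite_univ.exists_lt_map_eq_of_mapsTo
      (f := fun t : ℕ => (b (f (t + 2)), d t)) (fun t _ => hmaps t) hfin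
    have hlt : f (s + 2) < f (t + 2) := hf (by omega)
    simp only [Prod.mk.injEq] at heq
    refine ⟨f (s + 2), f (t + 2) - f (s + 2), by omega, ?_⟩
    rw [Nat.add_sub_cancel' hlt.le, hα, hα, ← hd, ← hd, heq.1, heq.2]
end

section
/- Let p be an odd prime and α ∈ ℚ_p a quadratic irrational whose BCF complete quotients admit a representation α_n = (b_n + δ)/(p^{k_n} c_n) with b_n, c_n, k_n ∈ ℤ, c_n ≠ 0, p ∤ c_n, where δ ∈ ℚ_p and δ² = Δ is a non-square integer with Δ > 0. Set t = ⌊√Δ⌋ and K = (2t+1)Δ + 1 − t(t+1)(2t+1)/3. If there exists n_0 > 0 such that (b_n² − Δ)(b_{n+1}² − Δ) < 0 for every n with n_0 ≤ n ≤ n_0 + 2K (i.e., the norms of the real embeddings of consecutive complete quotients have alternating signs on this range), then the BCF expansion of α is periodic with period length at most 2K: there exist m ≥ 0 and 1 ≤ N ≤ 2K with α_{m+N} = α_m. -/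
lemma bcf_sum (Δ : ℤ) (n : ℕ) :
    3 * ∑ b ∈ Finset.Icc (-(n : ℤ)) n, (Δ - b ^ 2) =
      3 * ((2 * n + 1) * Δ) - n * (n + 1) * (2 * n + 1) := by
  induction n with
  | zero => simp
  | succ n ih =>
    have h : Finset.Icc (-((n + 1 : ℕ) : ℤ)) ((n + 1 : ℕ) : ℤ) =
        insert (-((n : ℤ) + 1)) (insert ((n : ℤ) + 1) (Finset.Icc (-(n : ℤ)) n)) := by
      ext x
      simp only [Finset.mem_Icc, Finset.mem_insert]
      push_cast
      omega
    rw [h, Finset.sum_insert, Finset.sum_insert]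
    · push_cast
      rw [mul_add, mul_add, ih]
      ring
    · simp
    · simp only [Finset.mem_Icc, Finset.mem_insert]
      omega

lemma bcf_delta_irr (p : ℕ) [Fact p.Prime] (δ : ℚ_[p]) (Δ : ℤ)
    (hδ : δ ^ 2 = (Δ : ℚ_[p])) (hΔ : ¬IsSquare Δ) (q : ℚ) : δ ≠ (q : ℚ_[p]) := by
  rintro rfl
  apply hΔ
  have h : q ^ 2 = (Δ : ℚ) := by exact_mod_cast hδ
  have : IsSquare (Δ : ℚ) := ⟨q, by rw [← h]; ring⟩
  exact Rat.isSquare_intCast_iff.mp this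

lemma bcf_step (p : ℕ) [Fact p.Prime] (δ : ℚ_[p]) (Δ : ℤ)
    (hδ : δ ^ 2 = (Δ : ℚ_[p])) (hΔ : ¬IsSquare Δ)
    (b b' : ℤ) (C C' a : ℚ) (hC : C ≠ 0) (hC' : C' ≠ 0)
    (h : ((b' : ℚ_[p]) + δ) / (C' : ℚ_[p]) = (((b : ℚ_[p]) + δ) / (C : ℚ_[p]) - (a : ℚ_[p]))⁻¹) :
    C * C' = (Δ : ℚ) - (b' : ℚ) ^ 2 := by
  have irr := bcf_delta_irr p δ Δ hδ hΔ
  have hCp : (C : ℚ_[p]) ≠ 0 := by exact_mod_cast hC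
  have hCp' : (C' : ℚ_[p]) ≠ 0 := by exact_mod_cast hC'
  have h1 : (b : ℚ_[p]) + δ - a * C ≠ 0 := by
    intro h0
    apply irr (a * C - b)
    push_cast
    linear_combination h0
  have h2 : ((b : ℚ_[p]) + δ) / (C : ℚ_[p]) - (a : ℚ_[p]) = ((b : ℚ_[p]) + δ - a * C) / C := by
    field_simp
  rw [h2, inv_div, div_eq_div_iff hCp' h1] at h
  have hs : (b' : ℚ) + b - a * C = 0 := by
    by_contra hne
    apply irr ((C * C' - Δ - b' * (b - a * C)) / (b' + b - a * C))
    have hne' : (b' : ℚ_[p]) + b - a * C ≠ 0 := by exact_mod_cast hne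
    push_cast
    rw [eq_div_iff hne']
    linear_combination h - hδ
  have hs' : (b' : ℚ_[p]) + b - a * C = 0 := by exact_mod_cast hs
  have : (C : ℚ_[p]) * C' = (Δ : ℚ_[p]) - (b' : ℚ_[p]) ^ 2 := by
    linear_combination -h + hδ + (b' + δ) * hs'
  exact_mod_cast this

lemma bcf_k_pos (p : ℕ) [Fact p.Prime] (δ : ℚ_[p]) (Δ : ℤ)
    (hδ : δ ^ 2 = (Δ : ℚ_[p])) (b c k : ℤ) (hc : ¬ (p : ℤ) ∣ c) (x : ℚ_[p])
    (hx : x = ((b : ℚ_[p]) + δ) / ((p : ℚ_[p]) ^ k * (c : ℚ_[p]))) (hn : 1 < ‖x‖) : 1 ≤ k := by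
  by_contra hk
  have hp1 : (1 : ℝ) ≤ p := by exact_mod_cast (Fact.out : p.Prime).one_lt.le
  have hδ1 : ‖δ‖ ≤ 1 := by
    have : ‖δ‖ ^ 2 ≤ 1 := by rw [← norm_pow, hδ]; exact Padic.norm_int_le_one Δ
    nlinarith [norm_nonneg δ]
  have hb : ‖(b : ℚ_[p]) + δ‖ ≤ 1 :=
    (Padic.nonarchimedean _ _).trans (max_le (Padic.norm_int_le_one b) hδ1)
  have hcn : ‖(c : ℚ_[p])‖ = 1 := by
    refine le_antisymm (Padic.norm_int_le_one c) (not_lt.mp ?_)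
    rw [Padic.norm_intCast_lt_one_iff]
    exact hc
  rw [hx, norm_div, norm_mul, hcn, mul_one, Padic.norm_p_zpow] at hn
  have : (1 : ℝ) ≤ (p : ℝ) ^ (-k) := one_le_zpow₀ hp1 (by omega)
  have := div_le_one_of_le₀ (hb.trans this) (by positivity)
  linarith

/-- with `t = ⌊√Δ⌋` and `K = (2t+1)Δ + 1 − t(t+1)(2t+1)/3`, if the
norms of the real embeddings of consecutive complete quotients have alternating
signs (`(b_n² − Δ)(b_{n+1}² − Δ) < 0`) for every `n` with `n₀ ≤ n ≤ n₀ + 2K`,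
then the BCF expansion of `α` is periodic with period length at most `2K`. -/
theorem browkin_periodic_of_alternating_norms
    (p : ℕ) [Fact p.Prime] (hp : Odd p)
    (α : ℚ_[p]) (hirr : ∀ q : ℚ, α ≠ (q : ℚ_[p]))
    (αs : ℕ → ℚ_[p]) (a : ℕ → ℚ) (hα0 : αs 0 = α) (hbcf : IsBCF p αs a)
    (δ : ℚ_[p]) (Δ : ℤ) (hδ : δ ^ 2 = (Δ : ℚ_[p])) (hΔ : ¬IsSquare Δ)
    (b c : ℕ → ℤ) (kk : ℕ → ℤ)
    (hrep : ∀ n, c n ≠ 0 ∧ ¬((p : ℤ) ∣ c n) ∧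
      αs n = ((b n : ℚ_[p]) + δ) / ((p : ℚ_[p]) ^ (kk n) * (c n : ℚ_[p])))
    (hΔpos : 0 < Δ) (t K : ℤ) (ht : t = Int.sqrt Δ)
    (hK : K = (2 * t + 1) * Δ + 1 - t * (t + 1) * (2 * t + 1) / 3)
    (n0 : ℕ) (hn0 : 0 < n0)
    (halt : ∀ n : ℕ, n0 ≤ n → (n : ℤ) ≤ (n0 : ℤ) + 2 * K →
      ((b n) ^ 2 - Δ) * ((b (n + 1)) ^ 2 - Δ) < 0) :
    ∃ m N : ℕ, 1 ≤ N ∧ (N : ℤ) ≤ 2 * K ∧ αs (m + N) = αs m := by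
  have hp3 : 3 ≤ p := by
    have h2 := (Fact.out : p.Prime).two_le
    obtain ⟨r, hr⟩ := hp
    omega
  have hpQ : (p : ℚ) ≠ 0 := by
    have : p ≠ 0 := by omega
    exact_mod_cast this
  have irr := bcf_delta_irr p δ Δ hδ hΔ
  have hcQ : ∀ n, (p : ℚ) ^ (kk n) * (c n : ℚ) ≠ 0 := fun n =>
    mul_ne_zero (zpow_ne_zero _ hpQ) (by exact_mod_cast (hrep n).1)
  -- the basic relation
  have hrel : ∀ n, ((p : ℚ) ^ (kk n) * (c n : ℚ)) * ((p : ℚ) ^ (kk (n + 1)) * (c (n + 1) : ℚ)) =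
      (Δ : ℚ) - (b (n + 1) : ℚ) ^ 2 := by
    intro n
    apply bcf_step p δ Δ hδ hΔ (b n) (b (n + 1)) _ _ (a n) (hcQ n) (hcQ (n + 1))
    have h1 := (hbcf n).2.2
    rw [(hrep n).2.2, (hrep (n + 1)).2.2] at h1
    push_cast
    exact h1
  have hne : ∀ n, αs n ≠ 0 := by
    intro n h0
    rw [(hrep n).2.2, div_eq_zero_iff] at h0
    rcases h0 with h0 | h0
    · apply irr (-(b n : ℚ))
      push_cast
      linear_combination h0
    · have h1 : (((p : ℚ) ^ (kk n) * (c n : ℚ) : ℚ) : ℚ_[p]) = 0 := by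
        push_cast
        exact h0
      exact hcQ n (Rat.cast_eq_zero.mp h1)
  have hk : ∀ n, 1 ≤ n → 1 ≤ kk n := by
    intro n hn
    obtain ⟨j, rfl⟩ : ∃ j, n = j + 1 := ⟨n - 1, by omega⟩
    refine bcf_k_pos p δ Δ hδ _ _ _ (hrep (j + 1)).2.1 _ (hrep (j + 1)).2.2 ?_
    have h1 := (hbcf j).2.1
    have h2 := (hbcf j).2.2
    have h3 := hne (j + 1)
    rw [h2] at h3 ⊢
    rw [norm_inv]
    exact (one_lt_inv₀ (norm_pos_iff.mpr (fun h => h3 (by rw [h, inv_zero])))).mpr h1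
  -- the integral denominators
  obtain ⟨C, hCdef⟩ : ∃ C : ℕ → ℤ, ∀ n, C n = (p : ℤ) ^ (kk n).toNat * c n := ⟨_, fun _ => rfl⟩
  have hCQ : ∀ n, 1 ≤ n → (C n : ℚ) = (p : ℚ) ^ (kk n) * (c n : ℚ) := by
    intro n hn
    have : (p : ℚ) ^ (kk n) = (p : ℚ) ^ (kk n).toNat := by
      rw [← zpow_natCast, Int.toNat_of_nonneg (by linarith [hk n hn])]
    rw [this, hCdef]
    push_cast
    rfl
  have hCα : ∀ n, 1 ≤ n → αs n = ((b n : ℚ_[p]) + δ) / (C n : ℚ_[p]) := by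
    intro n hn
    have : (C n : ℚ_[p]) = (p : ℚ_[p]) ^ (kk n) * (c n : ℚ_[p]) := by
      have h := congrArg (fun q : ℚ => (q : ℚ_[p])) (hCQ n hn)
      push_cast at h
      exact h
    rw [(hrep n).2.2, this]
  have hCabs : ∀ n, 1 ≤ n → 3 ≤ |C n| := by
    intro n hn
    have h1 : 1 ≤ |c n| := Int.one_le_abs (hrep n).1
    have h2 : (3 : ℤ) ≤ (p : ℤ) ^ (kk n).toNat := by
      have : p ≤ p ^ (kk n).toNat := Nat.le_self_pow (by have := hk n hn; omega) p
      exact_mod_cast hp3.trans this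
    rw [hCdef, abs_mul, abs_of_nonneg (by positivity)]
    nlinarith
  have hCrel : ∀ n, 1 ≤ n → C n * C (n + 1) = Δ - b (n + 1) ^ 2 := by
    intro n hn
    have h := hrel n
    rw [← hCQ n hn, ← hCQ (n + 1) (by omega)] at h
    exact_mod_cast h
  have hCle : ∀ n, 2 ≤ n → 0 < Δ - b n ^ 2 → 3 * |C n| ≤ Δ - b n ^ 2 := by
    intro n hn hpos
    obtain ⟨j, rfl⟩ : ∃ j, n = j + 1 := ⟨n - 1, by omega⟩
    have h1 := hCrel j (by omega)
    have h2 := hCabs j (by omega)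
    have h3 : |C j| * |C (j + 1)| = Δ - b (j + 1) ^ 2 := by
      rw [← abs_mul, h1, abs_of_pos hpos]
    nlinarith [abs_nonneg (C (j + 1))]
  -- the value of `K`
  have ht0 : 0 ≤ t := by rw [ht]; exact Int.sqrt_nonneg Δ
  have htsq : t * t < Δ := by
    have h1 : t * t ≤ Δ := by
      have h := Nat.sqrt_le Δ.toNat
      rw [ht, Int.sqrt]
      zify at h
      rwa [Int.toNat_of_nonneg hΔpos.le] at h
    exact lt_of_le_of_ne h1 (fun h => hΔ ⟨t, h.symm⟩)
  have htlt : Δ < (t + 1) * (t + 1) := by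
    have h := Nat.lt_succ_sqrt Δ.toNat
    rw [ht, Int.sqrt]
    zify at h
    rwa [Int.toNat_of_nonneg hΔpos.le] at h
  have hKsum : ∑ x ∈ Finset.Icc (-t) t, (Δ - x ^ 2) = K - 1 := by
    have h := bcf_sum Δ t.toNat
    rw [Int.toNat_of_nonneg ht0] at h
    have h3 : t * (t + 1) * (2 * t + 1) =
        3 * ((2 * t + 1) * Δ - ∑ x ∈ Finset.Icc (-t) t, (Δ - x ^ 2)) := by linarith
    rw [h3, Int.mul_ediv_cancel_left _ (by norm_num)] at hK
    linarith
  have hmpos : ∀ x ∈ Finset.Icc (-t) t, 0 < Δ - x ^ 2 := by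
    intro x hx
    rw [Finset.mem_Icc] at hx
    nlinarith
  have hK1 : 1 ≤ K := by
    have := Finset.sum_nonneg (fun x hx => (hmpos x hx).le)
    linarith
  -- finite state space
  let S : Finset (Σ _ : ℤ, ℤ) := (Finset.Icc (-t) t).sigma
    (fun x => Finset.Icc (-((Δ - x ^ 2) / 3)) ((Δ - x ^ 2) / 3))
  have hScard : (S.card : ℤ) ≤ K - 1 := by
    rw [← hKsum, Finset.card_sigma]
    push_cast
    apply Finset.sum_le_sum
    intro x hx
    have := hmpos x hx
    rw [Int.card_Icc]
    omega
  -- the starting index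
  obtain ⟨s, hs1, hs2, hsneg⟩ : ∃ s, n0 + 1 ≤ s ∧ s ≤ n0 + 2 ∧ b s ^ 2 - Δ < 0 := by
    by_cases h : b (n0 + 1) ^ 2 - Δ < 0
    · exact ⟨n0 + 1, le_rfl, by omega, h⟩
    · refine ⟨n0 + 2, by omega, le_rfl, ?_⟩
      have h1 := halt (n0 + 1) (by omega) (by push_cast; omega)
      by_contra h2
      exact absurd h1 (not_lt.mpr (mul_nonneg (not_lt.mp h) (not_lt.mp h2)))
  have hneg : ∀ i : ℕ, (i : ℤ) < K → b (s + 2 * i) ^ 2 - Δ < 0 := by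
    intro i
    induction i with
    | zero => intro _; simpa using hsneg
    | succ i ih =>
      intro hi
      push_cast at hi
      have h0 := ih (by omega)
      have h1 := halt (s + 2 * i) (by omega) (by push_cast; omega)
      have h2 := halt (s + 2 * i + 1) (by omega) (by push_cast; omega)
      have h3 : 0 < b (s + 2 * i + 1) ^ 2 - Δ := by
        by_contra h
        exact absurd h1 (not_lt.mpr (mul_nonneg_of_nonpos_of_nonpos h0.le (not_lt.mp h)))
      have e : s + 2 * (i + 1) = s + 2 * i + 1 + 1 := by ring
      rw [e]
      by_contra h
      exact absurd h2 (not_lt.mpr (mul_nonneg h3.le (not_lt.mp h)))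
  have hmaps : Set.MapsTo (fun i : ℕ => (⟨b (s + 2 * i), C (s + 2 * i)⟩ : Σ _ : ℤ, ℤ))
      (Finset.range K.toNat) S := by
    intro i hi
    have hi' : (i : ℤ) < K := by
      have := Finset.mem_range.mp (Finset.mem_coe.mp hi)
      omega
    have h1 := hneg i hi'
    have h2 := hCle (s + 2 * i) (by omega) (by linarith)
    have h3 := abs_le.mp (show |C (s + 2 * i)| ≤ (Δ - b (s + 2 * i) ^ 2) / 3 by omega)
    simp only [S, Finset.mem_coe, Finset.mem_sigma, Finset.mem_Icc]
    refine ⟨⟨?_, ?_⟩, h3.1, h3.2⟩ <;> nlinarith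
  obtain ⟨i, hi, j, hj, hij, heq⟩ :=
    Finset.exists_ne_map_eq_of_card_lt_of_maps_to (by rw [Finset.card_range]; omega) hmaps
  have hb : b (s + 2 * i) = b (s + 2 * j) := congrArg Sigma.fst heq
  have hC : C (s + 2 * i) = C (s + 2 * j) := congrArg (fun z : Σ _ : ℤ, ℤ => z.2) heq
  have hα : αs (s + 2 * i) = αs (s + 2 * j) := by
    rw [hCα _ (by omega), hCα _ (by omega), hb, hC]
  rw [Finset.mem_range] at hi hj
  rcases lt_or_gt_of_ne hij with h | h
  · refine ⟨s + 2 * i, 2 * (j - i), by omega, by omega, ?_⟩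
    rw [hα]
    congr 1
    omega
  · refine ⟨s + 2 * j, 2 * (i - j), by omega, by omega, ?_⟩
    rw [← hα]
    congr 1
    omega
end
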